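/- Let p(x) = Σ_{j=0}^r b_{α(j)} x^{α(j)} + b_β x^β be a circuit polynomial in n real variables with β ∈ (2ℕ)^n and b_β > 0 (so p is a sum of monomial squares), or with |b_β| ≤ Θ_p. Conversely, combining both cases: p is nonnegative on ℝ^n if and only if p is a sum of monomial squares, or |b_β| ≤ Θ_p. -/

import Mathlib

/-!
Write `Θ = ∏ j, (b j / lam j) ^ lam j`. The weighted AM-GM inequality applied to the numbers
`b j / lam j * x ^ α j` reads `Θ * x ^ β ≤ ∑ j, b j * x ^ α j` on the nonnegative orthant, with
equality where all these numbers coincide. Uniqueness of the barycentric coordinates makes the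
exponents `α j` affinely independent, so in logarithmic coordinates `x = exp y` the equality
conditions form a solvable system of affine equations, and equality is attained at a positive point.
There nonnegativity forces `-Θ ≤ c`. If some `β i` is odd, the reflection `x i ↦ -x i` exchanges `c`
and `-c`, whence `|c| ≤ Θ`; if `β` is even, either `0 < c` or `|c| = -c ≤ Θ`.
-/

section AffineIndependence

theorem exists_pos_forall_pos_add_mul {κ 𝕜 : Type*} [Finite κ] [Field 𝕜] [LinearOrder 𝕜]
    [IsStrictOrderedRing 𝕜] {lam : κ → 𝕜} (hlam : ∀ j, 0 < lam j) (g : κ → 𝕜) :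
    ∃ ε > 0, ∀ j, 0 < lam j + ε * g j := by
  cases nonempty_fintype κ
  have hratio : ∀ j, 0 ≤ |g j| / lam j := fun j => div_nonneg (abs_nonneg _) (hlam j).le
  set M := 1 + ∑ j, |g j| / lam j
  have hMpos : 0 < M := add_pos_of_pos_of_nonneg one_pos (Finset.sum_nonneg fun j _ => hratio j)
  refine ⟨M⁻¹, inv_pos.2 hMpos, fun j => ?_⟩
  have hlt : |g j| / lam j < M :=
    (Finset.single_le_sum (fun k _ => hratio k) (Finset.mem_univ j)).trans_lt (lt_one_add _)
  have habs : M⁻¹ * |g j| < lam j := by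
    rwa [inv_mul_lt_iff₀ hMpos, ← div_lt_iff₀ (hlam j)]
  have hneg : M⁻¹ * -g j ≤ M⁻¹ * |g j| :=
    mul_le_mul_of_nonneg_left (neg_le_abs _) (inv_pos.2 hMpos).le
  linarith

theorem affineIndependent_of_unique_pos_weights {κ 𝕜 V : Type*} [Fintype κ] [Field 𝕜]
    [LinearOrder 𝕜] [IsStrictOrderedRing 𝕜] [AddCommGroup V] [Module 𝕜 V] {p : κ → V}
    {lam : κ → 𝕜} (hlam : ∀ j, 0 < lam j)
    (huniq : ∀ mu : κ → 𝕜, (∀ j, 0 < mu j) → ∑ j, mu j = ∑ j, lam j →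
      ∑ j, mu j • p j = ∑ j, lam j • p j → mu = lam) :
    AffineIndependent 𝕜 p := by
  rw [affineIndependent_iff_of_fintype]
  intro g hsum hcomb j
  rw [Finset.weightedVSub_eq_linear_combination _ hsum] at hcomb
  obtain ⟨ε, hε, hpos⟩ := exists_pos_forall_pos_add_mul hlam g
  have hperturbed : (fun j => lam j + ε * g j) = lam := huniq _ hpos
    (by rw [Finset.sum_add_distrib, ← Finset.mul_sum, hsum, mul_zero, add_zero])
    (by simp only [add_smul, mul_smul, Finset.sum_add_distrib, ← Finset.smul_sum, hcomb,
          smul_zero, add_zero])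
  have hj : ε * g j = 0 := add_eq_left.1 (congrFun hperturbed j)
  exact (mul_eq_zero.1 hj).resolve_left hε.ne'

theorem exists_linearMap_apply_eq_of_linearIndependent {κ 𝕜 V W : Type*} [DivisionRing 𝕜]
    [AddCommGroup V] [Module 𝕜 V] [AddCommGroup W] [Module 𝕜 W] {v : κ → V}
    (hv : LinearIndependent 𝕜 v) (d : κ → W) : ∃ f : V →ₗ[𝕜] W, ∀ j, f (v j) = d j := by
  let B := Module.Basis.span hv
  obtain ⟨f, hf⟩ := LinearMap.exists_extend (B.constr ℕ d)
  refine ⟨f, fun j => ?_⟩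
  calc f (v j) = (f ∘ₗ (Submodule.span 𝕜 (Set.range v)).subtype) (B j) := by
        rw [LinearMap.comp_apply, Submodule.subtype_apply, Module.Basis.coe_span_apply]
    _ = d j := by rw [hf, B.constr_basis]

theorem exists_affineMap_apply_eq_of_affineIndependent {κ 𝕜 V P W : Type*} [DivisionRing 𝕜]
    [AddCommGroup V] [Module 𝕜 V] [AddTorsor V P] [AddCommGroup W] [Module 𝕜 W] {p : κ → P}
    (hp : AffineIndependent 𝕜 p) (d : κ → W) : ∃ f : P →ᵃ[𝕜] W, ∀ j, f (p j) = d j := by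
  obtain _ | ⟨⟨k⟩⟩ := isEmpty_or_nonempty κ
  · exact ⟨AffineMap.const 𝕜 P 0, isEmptyElim⟩
  obtain ⟨f, hf⟩ := exists_linearMap_apply_eq_of_linearIndependent
    ((affineIndependent_iff_linearIndependent_vsub 𝕜 p k).1 hp) fun j => d j - d k
  refine ⟨f.toAffineMap.comp (AffineEquiv.vaddConst 𝕜 (p k)).symm.toAffineMap +
    AffineMap.const 𝕜 P (d k), fun j => ?_⟩
  obtain rfl | hj := eq_or_ne j k
  · simp
  · have hfj : f (p j -ᵥ p k) = d j - d k := hf ⟨j, hj⟩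
    simp [hfj]

theorem exists_pos_prod_rpow_eq_mul {ι κ : Type*} [Fintype ι] {a : κ → ι → ℝ}
    (ha : AffineIndependent ℝ a) {w : κ → ℝ} (hw : ∀ j, 0 < w j) :
    ∃ x : ι → ℝ, (∀ i, 0 < x i) ∧ ∃ s : ℝ, ∀ j, ∏ i, x i ^ a j i = s * w j := by
  classical
  obtain ⟨f, hf⟩ := exists_affineMap_apply_eq_of_affineIndependent ha fun j => Real.log (w j)
  let y : ι → ℝ := fun i => f.linear fun k => if i = k then 1 else 0
  refine ⟨fun i => Real.exp (y i), fun i => Real.exp_pos _, Real.exp (-f 0), fun j => ?_⟩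
  have hy : ∑ i, y i * a j i = -f 0 + Real.log (w j) := by
    have hdecomp : f (a j) = f.linear (a j) + f 0 := congrFun f.decomp (a j)
    rw [hf, f.linear.pi_apply_eq_sum_univ] at hdecomp
    simp only [smul_eq_mul, mul_comm (a j _)] at hdecomp
    linarith
  simp_rw [← Real.exp_mul]
  rw [← Real.exp_sum, hy, Real.exp_add, Real.exp_log (hw j)]

end AffineIndependence

section SignChange

variable {ι R : Type*} [Fintype ι] [DecidableEq ι] [CommRing R]

theorem prod_update_neg_pow (x : ι → R) (k : ι) (a : ι → ℕ) :
    ∏ i, Function.update x k (-x k) i ^ a i = (-1) ^ a k * ∏ i, x i ^ a i := by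
  rw [← Finset.mul_prod_erase _ _ (Finset.mem_univ k),
    ← Finset.mul_prod_erase _ (fun i => x i ^ a i) (Finset.mem_univ k), ← mul_assoc, ← neg_pow,
    Function.update_self]
  congr 1
  refine Finset.prod_congr rfl fun i hi => ?_
  rw [Function.update_of_ne (Finset.ne_of_mem_erase hi)]

theorem sum_add_neg_mul_prod_pow_eq_update {κ : Type*} [Fintype κ] {α : κ → ι → ℕ} {β : ι → ℕ}
    {k : ι} (hα : ∀ j, Even (α j k)) (hβ : Odd (β k)) (b : κ → R) (c : R) (x : ι → R) :
    (∑ j, b j * ∏ i, x i ^ α j i) + -c * ∏ i, x i ^ β i =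
      (∑ j, b j * ∏ i, Function.update x k (-x k) i ^ α j i) +
        c * ∏ i, Function.update x k (-x k) i ^ β i := by
  simp only [prod_update_neg_pow, (hα _).neg_one_pow, hβ.neg_one_pow, one_mul, neg_mul, mul_neg]

end SignChange

section CircuitNumber

variable {ι κ : Type*} [Fintype ι] [Fintype κ] {b lam : κ → ℝ}

/-- The circuit number `Θ` of a circuit polynomial whose vertex monomials have coefficients `b` and
whose inner exponent has barycentric coordinates `lam` with respect to the vertex exponents. The
exponents themselves enter only through `lam`. -/
noncomputable def circuitNumber (b lam : κ → ℝ) : ℝ :=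
  ∏ j, (b j / lam j) ^ lam j

theorem circuitNumber_mul_prod_rpow (hb : ∀ j, 0 ≤ b j) (hlam : ∀ j, 0 ≤ lam j) {t : κ → ℝ}
    (ht : ∀ j, 0 ≤ t j) :
    circuitNumber b lam * ∏ j, t j ^ lam j = ∏ j, (b j / lam j * t j) ^ lam j := by
  rw [circuitNumber, ← Finset.prod_mul_distrib]
  exact Finset.prod_congr rfl fun j _ =>
    (Real.mul_rpow (div_nonneg (hb j) (hlam j)) (ht j)).symm

theorem circuitNumber_mul_prod_rpow_le_sum (hb : ∀ j, 0 ≤ b j) (hlam : ∀ j, 0 < lam j)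
    (hsum : ∑ j, lam j = 1) {t : κ → ℝ} (ht : ∀ j, 0 ≤ t j) :
    circuitNumber b lam * ∏ j, t j ^ lam j ≤ ∑ j, b j * t j :=
  calc circuitNumber b lam * ∏ j, t j ^ lam j
      = ∏ j, (b j / lam j * t j) ^ lam j :=
        circuitNumber_mul_prod_rpow hb (fun j => (hlam j).le) ht
    _ ≤ ∑ j, lam j * (b j / lam j * t j) :=
        Real.geom_mean_le_arith_mean_weighted _ _ _ (fun j _ => (hlam j).le) hsum
          fun j _ => mul_nonneg (div_nonneg (hb j) (hlam j).le) (ht j)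
    _ = ∑ j, b j * t j := Finset.sum_congr rfl fun j _ => by
        rw [← mul_assoc, mul_div_cancel₀ _ (hlam j).ne']

theorem circuitNumber_mul_prod_rpow_eq_sum (hb : ∀ j, 0 ≤ b j) (hlam : ∀ j, 0 < lam j)
    (hsum : ∑ j, lam j = 1) {t : κ → ℝ} (ht : ∀ j, 0 ≤ t j) {s : ℝ}
    (hs : ∀ j, b j * t j = s * lam j) :
    circuitNumber b lam * ∏ j, t j ^ lam j = ∑ j, b j * t j := by
  have hconst : ∀ j, b j / lam j * t j = s := fun j => by
    rw [div_mul_eq_mul_div, hs, mul_div_cancel_right₀ _ (hlam j).ne']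
  calc circuitNumber b lam * ∏ j, t j ^ lam j
      = ∏ j, (b j / lam j * t j) ^ lam j :=
        circuitNumber_mul_prod_rpow hb (fun j => (hlam j).le) ht
    _ = s := Real.geom_mean_weighted_of_constant _ _ _ _ (fun j _ => (hlam j).le) hsum
          (fun j _ => mul_nonneg (div_nonneg (hb j) (hlam j).le) (ht j)) fun j _ _ => hconst j
    _ = ∑ j, b j * t j := by simp_rw [hs]; rw [← Finset.mul_sum, hsum, mul_one]

variable {α : κ → ι → ℕ} {β : ι → ℕ} {x : ι → ℝ}

theorem prod_prod_pow_rpow_eq_prod_pow (hlam : ∀ j, 0 ≤ lam j)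
    (hβ : ∀ i, (β i : ℝ) = ∑ j, lam j * α j i) (hx : ∀ i, 0 ≤ x i) :
    ∏ j, (∏ i, x i ^ α j i) ^ lam j = ∏ i, x i ^ β i :=
  calc ∏ j, (∏ i, x i ^ α j i) ^ lam j
      = ∏ j, ∏ i, (x i ^ α j i) ^ lam j := Finset.prod_congr rfl fun j _ =>
        (Real.finsetProd_rpow _ _ (fun i _ => pow_nonneg (hx i) _) _).symm
    _ = ∏ i, ∏ j, x i ^ (lam j * α j i) := by
        simp_rw [mul_comm (lam _), Real.rpow_mul (hx _), Real.rpow_natCast]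
        exact Finset.prod_comm
    _ = ∏ i, x i ^ β i := Finset.prod_congr rfl fun i _ => by
        rw [← Real.rpow_natCast, hβ, Real.rpow_sum_of_nonneg (hx i)
          fun j _ => mul_nonneg (hlam j) (Nat.cast_nonneg _)]

theorem circuitNumber_mul_prod_pow_le_sum (hb : ∀ j, 0 ≤ b j) (hlam : ∀ j, 0 < lam j)
    (hsum : ∑ j, lam j = 1) (hβ : ∀ i, (β i : ℝ) = ∑ j, lam j * α j i) (hx : ∀ i, 0 ≤ x i) :
    circuitNumber b lam * ∏ i, x i ^ β i ≤ ∑ j, b j * ∏ i, x i ^ α j i := by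
  rw [← prod_prod_pow_rpow_eq_prod_pow (fun j => (hlam j).le) hβ hx]
  exact circuitNumber_mul_prod_rpow_le_sum hb hlam hsum fun j =>
    Finset.prod_nonneg fun i _ => pow_nonneg (hx i) _

theorem exists_pos_circuitNumber_mul_prod_pow_eq_sum (hb : ∀ j, 0 < b j) (hlam : ∀ j, 0 < lam j)
    (hsum : ∑ j, lam j = 1) (hβ : ∀ i, (β i : ℝ) = ∑ j, lam j * α j i)
    (hα : AffineIndependent ℝ fun j i => (α j i : ℝ)) :
    ∃ x : ι → ℝ, (∀ i, 0 < x i) ∧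
      circuitNumber b lam * ∏ i, x i ^ β i = ∑ j, b j * ∏ i, x i ^ α j i := by
  obtain ⟨x, hx, s, hxs⟩ := exists_pos_prod_rpow_eq_mul hα fun j => div_pos (hlam j) (hb j)
  simp only [Real.rpow_natCast] at hxs
  refine ⟨x, hx, ?_⟩
  rw [← prod_prod_pow_rpow_eq_prod_pow (fun j => (hlam j).le) hβ fun i => (hx i).le]
  refine circuitNumber_mul_prod_rpow_eq_sum (s := s) (fun j => (hb j).le) hlam hsum
    (fun j => Finset.prod_nonneg fun i _ => pow_nonneg (hx i).le _) fun j => ?_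
  rw [hxs, mul_left_comm, mul_div_cancel₀ _ (hb j).ne']

theorem neg_circuitNumber_le_of_forall_nonneg {c : ℝ} (hb : ∀ j, 0 < b j) (hlam : ∀ j, 0 < lam j)
    (hsum : ∑ j, lam j = 1) (hβ : ∀ i, (β i : ℝ) = ∑ j, lam j * α j i)
    (hα : AffineIndependent ℝ fun j i => (α j i : ℝ))
    (hnonneg : ∀ x : ι → ℝ, 0 ≤ (∑ j, b j * ∏ i, x i ^ α j i) + c * ∏ i, x i ^ β i) :
    -circuitNumber b lam ≤ c := by
  obtain ⟨x, hx, heq⟩ := exists_pos_circuitNumber_mul_prod_pow_eq_sum hb hlam hsum hβ hα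
  have hxβ : 0 < ∏ i, x i ^ β i := Finset.prod_pos fun i _ => pow_pos (hx i) _
  have hprod : 0 ≤ (circuitNumber b lam + c) * ∏ i, x i ^ β i := by
    rw [add_mul, heq]
    exact hnonneg x
  linarith [nonneg_of_mul_nonneg_left hprod hxβ]

theorem abs_le_circuitNumber_of_forall_nonneg_of_odd {c : ℝ} {k : ι} (hb : ∀ j, 0 < b j)
    (hlam : ∀ j, 0 < lam j) (hsum : ∑ j, lam j = 1)
    (hβ : ∀ i, (β i : ℝ) = ∑ j, lam j * α j i)
    (hα : AffineIndependent ℝ fun j i => (α j i : ℝ)) (heven : ∀ j, Even (α j k))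
    (hodd : Odd (β k))
    (hnonneg : ∀ x : ι → ℝ, 0 ≤ (∑ j, b j * ∏ i, x i ^ α j i) + c * ∏ i, x i ^ β i) :
    |c| ≤ circuitNumber b lam := by
  classical
  have hlower : -circuitNumber b lam ≤ c :=
    neg_circuitNumber_le_of_forall_nonneg hb hlam hsum hβ hα hnonneg
  have hupper : -circuitNumber b lam ≤ -c :=
    neg_circuitNumber_le_of_forall_nonneg hb hlam hsum hβ hα fun x =>
      (hnonneg _).trans_eq (sum_add_neg_mul_prod_pow_eq_update heven hodd b c x).symm
  exact abs_le.2 ⟨hlower, neg_le_neg_iff.1 hupper⟩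

theorem sum_add_mul_prod_pow_nonneg_of_abs_le {c : ℝ} (hb : ∀ j, 0 ≤ b j)
    (hlam : ∀ j, 0 < lam j) (hsum : ∑ j, lam j = 1)
    (hβ : ∀ i, (β i : ℝ) = ∑ j, lam j * α j i) (heven : ∀ j i, Even (α j i))
    (hc : |c| ≤ circuitNumber b lam) (x : ι → ℝ) :
    0 ≤ (∑ j, b j * ∏ i, x i ^ α j i) + c * ∏ i, x i ^ β i := by
  have habs : |c * ∏ i, x i ^ β i| ≤ ∑ j, b j * ∏ i, x i ^ α j i :=
    calc |c * ∏ i, x i ^ β i|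
        = |c| * ∏ i, |x i| ^ β i := by simp_rw [abs_mul, Finset.abs_prod, abs_pow]
      _ ≤ circuitNumber b lam * ∏ i, |x i| ^ β i :=
          mul_le_mul_of_nonneg_right hc (Finset.prod_nonneg fun i _ => pow_nonneg (abs_nonneg _) _)
      _ ≤ ∑ j, b j * ∏ i, |x i| ^ α j i :=
          circuitNumber_mul_prod_pow_le_sum hb hlam hsum hβ fun i => abs_nonneg _
      _ = ∑ j, b j * ∏ i, x i ^ α j i := by simp_rw [(heven _ _).pow_abs]
  linarith [neg_abs_le (c * ∏ i, x i ^ β i)]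

theorem sum_add_mul_prod_pow_nonneg_of_even {c : ℝ} (hb : ∀ j, 0 ≤ b j)
    (heven : ∀ j i, Even (α j i)) (hβ : ∀ i, Even (β i)) (hc : 0 ≤ c) (x : ι → ℝ) :
    0 ≤ (∑ j, b j * ∏ i, x i ^ α j i) + c * ∏ i, x i ^ β i :=
  add_nonneg
    (Finset.sum_nonneg fun j _ =>
      mul_nonneg (hb j) (Finset.prod_nonneg fun i _ => (heven j i).pow_nonneg _))
    (mul_nonneg hc (Finset.prod_nonneg fun i _ => (hβ i).pow_nonneg _))

theorem circuit_polynomial_nonneg_iff_general {c : ℝ} (hb : ∀ j, 0 < b j)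
    (hlam : ∀ j, 0 < lam j) (hsum : ∑ j, lam j = 1)
    (hβ : ∀ i, (β i : ℝ) = ∑ j, lam j * α j i)
    (hα : AffineIndependent ℝ fun j i => (α j i : ℝ)) (heven : ∀ j i, Even (α j i)) :
    (∀ x : ι → ℝ, 0 ≤ (∑ j, b j * ∏ i, x i ^ α j i) + c * ∏ i, x i ^ β i) ↔
      ((∀ i, Even (β i)) ∧ 0 < c) ∨ |c| ≤ circuitNumber b lam := by
  constructor
  · intro hnonneg
    by_cases hβeven : ∀ i, Even (β i)
    · obtain hc | hc := lt_or_ge 0 c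
      · exact Or.inl ⟨hβeven, hc⟩
      · have hlower : -circuitNumber b lam ≤ c :=
          neg_circuitNumber_le_of_forall_nonneg hb hlam hsum hβ hα hnonneg
        exact Or.inr ((abs_of_nonpos hc).trans_le (neg_le.1 hlower))
    · obtain ⟨k, hk⟩ := not_forall.1 hβeven
      exact Or.inr (abs_le_circuitNumber_of_forall_nonneg_of_odd hb hlam hsum hβ hα
        (fun j => heven j k) (Nat.not_even_iff_odd.1 hk) hnonneg)
  · rintro (⟨hβeven, hc⟩ | hc)
    · exact sum_add_mul_prod_pow_nonneg_of_even (fun j => (hb j).le) heven hβeven hc.le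
    · exact sum_add_mul_prod_pow_nonneg_of_abs_le (fun j => (hb j).le) hlam hsum hβ heven hc

end CircuitNumber

/-- (Nonnegativity of circuit polynomials, both directions
combined.) A circuit polynomial
`p(x) = Σ_{j=0}^r b_{α(j)} x^{α(j)} + b_β x^β` is nonnegative on `ℝ^n` if and
only if `p` is a sum of monomial squares (i.e. `β ∈ (2ℕ)^n` and `b_β > 0`) or
`|b_β| ≤ Θ_p`, where `Θ_p = Π_j (b_{α(j)}/λ_j)^{λ_j}` is the circuit number. -/
theorem circuit_polynomial_nonneg_iff
    (n r : ℕ) (hr : r ≤ n)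
    (α : Fin (r + 1) → Fin n → ℕ) (β : Fin n → ℕ)
    (b : Fin (r + 1) → ℝ) (c : ℝ) (lam : Fin (r + 1) → ℝ)
    (hb : ∀ j, 0 < b j)
    (heven : ∀ j i, Even (α j i))
    (hlam : ∀ j, 0 < lam j)
    (hlamsum : ∑ j, lam j = 1)
    (hbar : ∀ i, (β i : ℝ) = ∑ j, lam j * (α j i : ℝ))
    (huniq : ∀ mu : Fin (r + 1) → ℝ, (∀ j, 0 < mu j) → ∑ j, mu j = 1 →
        (∀ i, (β i : ℝ) = ∑ j, mu j * (α j i : ℝ)) → mu = lam) :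
    (∀ x : Fin n → ℝ,
        0 ≤ (∑ j, b j * ∏ i, x i ^ α j i) + c * ∏ i, x i ^ β i) ↔
      (((∀ i, Even (β i)) ∧ 0 < c) ∨ |c| ≤ ∏ j, (b j / lam j) ^ lam j) := by
  have hα : AffineIndependent ℝ fun j i => (α j i : ℝ) := by
    refine affineIndependent_of_unique_pos_weights hlam fun mu hmu hmusum hmubar =>
      huniq mu hmu (hmusum.trans hlamsum) fun i => ?_
    simpa only [Finset.sum_apply, Pi.smul_apply, smul_eq_mul, ← hbar i] using
      (congrFun hmubar i).symm
  exact circuit_polynomial_nonneg_iff_general hb hlam hlamsum hbar hα heven
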